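/- arXiv:2204.06652 — 6 statements merged into one kernel-verified Lean document; each statement's English description precedes it below -/
import Mathlib

section
/- Let d, n ∈ ℕ with n ≥ 1, let X be a nonempty type (the solution space), let ρ ≥ 0 and Δ ≥ 0. Let f : EuclideanSpace ℝ (Fin d) → X → ℝ be a per-point cost function such that f(y, x) ≥ 1 for all y and all x ∈ X, and such that f is ρ-Lipschitz in its first argument. Let y_1, …, y_n and y'_1, …, y'_n be points of EuclideanSpace ℝ (Fin d) with ‖y_i − y'_i‖ ≤ Δ for every i. Then for every x ∈ X, (1 − ρΔ)·max_{1≤i≤n} f(y_i, x) ≤ max_{1≤i≤n} f(y'_i, x) ≤ (1 + ρΔ)·max_{1≤i≤n} f(y_i, x). -/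
/-!
Both maxima differ by at most the additive error `ρ * Δ`, since each pair of corresponding costs
does. As every cost is at least `1`, so is the maximum `M` over the original points; hence
`ρ * Δ ≤ ρ * Δ * M`, which turns the additive error into a relative one.
-/

/-- Maximum-cost case of Lemma IV.1 (quantization impact): a pointwise Δ-perturbation of a
dataset changes the maximum cost by at most a relative factor ρΔ. -/
theorem quantization_impact_max_cost
    (d n : ℕ) (hn : 1 ≤ n) (X : Type*) [Nonempty X]
    (ρ Δ : ℝ) (hρ : 0 ≤ ρ) (hΔ : 0 ≤ Δ)
    (f : EuclideanSpace ℝ (Fin d) → X → ℝ)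
    (hf1 : ∀ y x, 1 ≤ f y x)
    (hlip : ∀ y z x, |f y x - f z x| ≤ ρ * ‖y - z‖)
    (y y' : Fin n → EuclideanSpace ℝ (Fin d))
    (hq : ∀ i, ‖y i - y' i‖ ≤ Δ)
    (hne : (Finset.univ : Finset (Fin n)).Nonempty :=
      Finset.univ_nonempty_iff.mpr (Fin.pos_iff_nonempty.mp hn)) :
    ∀ x : X,
      (1 - ρ * Δ) * Finset.univ.sup' hne (fun i => f (y i) x) ≤
        Finset.univ.sup' hne (fun i => f (y' i) x) ∧
      Finset.univ.sup' hne (fun i => f (y' i) x) ≤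
        (1 + ρ * Δ) * Finset.univ.sup' hne (fun i => f (y i) x) := by
  intro x
  have hε : 0 ≤ ρ * Δ := mul_nonneg hρ hΔ
  have hpt : ∀ i, |f (y i) x - f (y' i) x| ≤ ρ * Δ := fun i =>
    (hlip _ _ x).trans (mul_le_mul_of_nonneg_left (hq i) hρ)
  set M := Finset.univ.sup' hne (fun i => f (y i) x) with hM
  set M' := Finset.univ.sup' hne (fun i => f (y' i) x) with hM'
  have hle : ∀ i, f (y i) x ≤ M := fun i =>
    Finset.le_sup' (fun i => f (y i) x) (Finset.mem_univ i)
  have hle' : ∀ i, f (y' i) x ≤ M' := fun i =>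
    Finset.le_sup' (fun i => f (y' i) x) (Finset.mem_univ i)
  have hM1 : 1 ≤ M := (hf1 _ x).trans (hle hne.choose)
  have hrel : ρ * Δ ≤ ρ * Δ * M := le_mul_of_one_le_right hε hM1
  have hlower : M ≤ M' + ρ * Δ := Finset.sup'_le _ _ fun i _ => by
    linarith [(abs_le.mp (hpt i)).2, hle' i]
  have hupper : M' ≤ M + ρ * Δ := Finset.sup'_le _ _ fun i _ => by
    linarith [(abs_le.mp (hpt i)).1, hle i]
  constructor <;> linarith
end

section
/- Let d, k ∈ ℕ with k ≥ 1, let X be a nonempty type, let ρ ≥ 0 and Δ ≥ 0. Let f : EuclideanSpace ℝ (Fin d) → X → ℝ satisfy f(y, x) ≥ 1 for all y and all x ∈ X, and be ρ-Lipschitz in its first argument. Let q_1, …, q_k and q'_1, …, q'_k be points of EuclideanSpace ℝ (Fin d) with ‖q_j − q'_j‖ ≤ Δ for every j, and let u_1, …, u_k ≥ 0 be weights. Then for every x ∈ X, (1 − ρΔ)·∑_{j=1}^k u_j f(q_j, x) ≤ ∑_{j=1}^k u_j f(q'_j, x) ≤ (1 + ρΔ)·∑_{j=1}^k u_j f(q_j,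 x). -/
/-- Weighted version of Lemma IV.1: moving each coreset point by at most Δ changes the
weighted sum cost by at most a relative factor ρΔ. -/
theorem quantization_impact_weighted_sum_cost
    (d k : ℕ) (hk : 1 ≤ k) (X : Type*) [Nonempty X]
    (ρ Δ : ℝ) (hρ : 0 ≤ ρ) (hΔ : 0 ≤ Δ)
    (f : EuclideanSpace ℝ (Fin d) → X → ℝ)
    (hf1 : ∀ y x, 1 ≤ f y x)
    (hlip : ∀ y z x, |f y x - f z x| ≤ ρ * ‖y - z‖)
    (q q' : Fin k → EuclideanSpace ℝ (Fin d))
    (hq : ∀ j, ‖q j - q' j‖ ≤ Δ)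
    (u : Fin k → ℝ) (hu : ∀ j, 0 ≤ u j) :
    ∀ x : X,
      (1 - ρ * Δ) * ∑ j, u j * f (q j) x ≤ ∑ j, u j * f (q' j) x ∧
      ∑ j, u j * f (q' j) x ≤ (1 + ρ * Δ) * ∑ j, u j * f (q j) x := by
  intro x
  -- Since `f ≥ 1`, the additive Lipschitz error `ρ * Δ` is at most the relative error
  -- `ρ * Δ * f (q j) x`; the two-sided bound then holds term by term.
  have key : ∀ j, |f (q j) x - f (q' j) x| ≤ ρ * Δ * f (q j) x := fun j =>
    calc |f (q j) x - f (q' j) x| ≤ ρ * ‖q j - q' j‖ := hlip _ _ _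
      _ ≤ ρ * Δ := mul_le_mul_of_nonneg_left (hq j) hρ
      _ ≤ ρ * Δ * f (q j) x := le_mul_of_one_le_right (mul_nonneg hρ hΔ) (hf1 _ _)
  rw [Finset.mul_sum, Finset.mul_sum]
  constructor <;> refine Finset.sum_le_sum fun j _ => ?_ <;>
    rw [mul_left_comm] <;> refine mul_le_mul_of_nonneg_left ?_ (hu j) <;>
    linarith [abs_le.mp (key j)]
end

section
/- Let d, n, k ∈ ℕ with n ≥ 1 and k ≥ 1, let X be a nonempty type, let ρ ≥ 0, Δ ≥ 0 and ε ≥ 0. Let f : EuclideanSpace ℝ (Fin d) → X → ℝ satisfy f(y, x) ≥ 1 for all y and x ∈ X, and be ρ-Lipschitz in its first argument. Let y_1, …, y_n be points of EuclideanSpace ℝ (Fin d) (the original dataset), let q_1, …, q_k be points with nonnegative weights u_1, …, u_k forming an ε-coreset with respect to the sum cost, i.e., for every x ∈ X, (1 − ε)·∑_{i=1}^n f(y_i, x) ≤ ∑_{j=1}^k u_j f(q_j, x) ≤ (1 + ε)·∑_{i=1}^n f(y_i, x). Let q'_1, …, q'_k satisfy ‖q_j − q'_j‖ ≤ Δ for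 every j. Then for every x ∈ X, (1 − (ε + ρΔ + ε·ρΔ))·∑_{i=1}^n f(y_i, x) ≤ ∑_{j=1}^k u_j f(q'_j, x) ≤ (1 + ε + ρΔ + ε·ρΔ)·∑_{i=1}^n f(y_i, x). -/
/-! Since `f ≥ 1`, an additive error of at most `ρ * Δ` in one value of `f` is at most
`ρ * Δ` times that value. Summing with nonnegative weights, quantization changes the coreset cost
`S` by at most `ρ * Δ * S`, and the upper coreset bound gives `S ≤ (1 + ε) * T`, where `T` is the
dataset cost. Adding this error `ρ * Δ * (1 + ε) * T` to either coreset bound gives the claim;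
using the upper bound on `S` for the lower estimate too avoids any need for `ρ * Δ ≤ 1`. -/

/-- Sum-cost case of Theorem IV.1: applying a Δ-maximum-error quantizer to an ε-coreset
yields an (ε + ρΔ + ε·ρΔ)-coreset. -/
theorem quantized_coreset_sum_cost
    (d n k : ℕ) (hn : 1 ≤ n) (hk : 1 ≤ k) (X : Type*) [Nonempty X]
    (ρ Δ ε : ℝ) (hρ : 0 ≤ ρ) (hΔ : 0 ≤ Δ) (hε : 0 ≤ ε)
    (f : EuclideanSpace ℝ (Fin d) → X → ℝ)
    (hf1 : ∀ y x, 1 ≤ f y x)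
    (hlip : ∀ y z x, |f y x - f z x| ≤ ρ * ‖y - z‖)
    (y : Fin n → EuclideanSpace ℝ (Fin d))
    (q q' : Fin k → EuclideanSpace ℝ (Fin d))
    (u : Fin k → ℝ) (hu : ∀ j, 0 ≤ u j)
    (hcoreset : ∀ x : X,
      (1 - ε) * ∑ i, f (y i) x ≤ ∑ j, u j * f (q j) x ∧
      ∑ j, u j * f (q j) x ≤ (1 + ε) * ∑ i, f (y i) x)
    (hq : ∀ j, ‖q j - q' j‖ ≤ Δ) :
    ∀ x : X,
      (1 - (ε + ρ * Δ + ε * (ρ * Δ))) * ∑ i, f (y i) x ≤ ∑ j, u j * f (q' j) x ∧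
      ∑ j, u j * f (q' j) x ≤ (1 + ε + ρ * Δ + ε * (ρ * Δ)) * ∑ i, f (y i) x := by
  intro x
  obtain ⟨hlow, hup⟩ := hcoreset x
  have hρΔ : 0 ≤ ρ * Δ := mul_nonneg hρ hΔ
  have hpt : ∀ j, |f (q j) x - f (q' j) x| ≤ ρ * Δ * f (q j) x := fun j =>
    calc |f (q j) x - f (q' j) x| ≤ ρ * ‖q j - q' j‖ := hlip _ _ _
      _ ≤ ρ * Δ := mul_le_mul_of_nonneg_left (hq j) hρ
      _ ≤ ρ * Δ * f (q j) x := le_mul_of_one_le_right hρΔ (hf1 _ _)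
  have hsum : |∑ j, u j * f (q j) x - ∑ j, u j * f (q' j) x|
      ≤ ρ * Δ * ∑ j, u j * f (q j) x := by
    rw [← Finset.sum_sub_distrib, Finset.mul_sum]
    refine (Finset.abs_sum_le_sum_abs _ _).trans (Finset.sum_le_sum fun j _ => ?_)
    rw [← mul_sub, abs_mul, abs_of_nonneg (hu j), mul_left_comm]
    exact mul_le_mul_of_nonneg_left (hpt j) (hu j)
  have herr := mul_le_mul_of_nonneg_left hup hρΔ
  obtain ⟨h₁, h₂⟩ := abs_le.mp hsum
  constructor <;> linarith
end

section
/- Let d, n, k ∈ ℕ with n ≥ 1 and k ≥ 1, let X be a nonempty type, let ρ ≥ 0, Δ ≥ 0 and ε ≥ 0. Let f : EuclideanSpace ℝ (Fin d) → X → ℝ satisfy f(y, x) ≥ 1 for all y and x ∈ X, and be ρ-Lipschitz in its first argument. Let y_1, …, y_n be points of EuclideanSpace ℝ (Fin d), and let q_1, …, q_k be points forming an ε-coreset with respect to the maximum cost, i.e., for every x ∈ X, (1 − ε)·max_{1≤i≤n} f(y_i, x) ≤ max_{1≤j≤k} f(q_j, x) ≤ (1 + ε)·max_{1≤i≤n}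 f(y_i, x). Let q'_1, …, q'_k satisfy ‖q_j − q'_j‖ ≤ Δ for every j. Then for every x ∈ X, (1 − (ε + ρΔ + ε·ρΔ))·max_{1≤i≤n} f(y_i, x) ≤ max_{1≤j≤k} f(q'_j, x) ≤ (1 + ε + ρΔ + ε·ρΔ)·max_{1≤i≤n} f(y_i, x). -/
/-!
Moving each coreset point by at most `Δ` moves its cost by at most `ρ * Δ`, hence moves the maximum
cost by at most `ρ * Δ` (`sup'_le_sup'_add`, used in both directions). Since every cost is at least
`1`, so is the maximum cost `M` of the dataset, and the additive error `ρ * Δ` is at most the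
multiplicative error `ρ * Δ * M`. Adding this to the coreset error `ε * M` gives the claim, with the
nonnegative term `ε * (ρ * Δ) * M` to spare.
-/

theorem sup'_le_sup'_add {ι : Type*} {s : Finset ι} (hs : s.Nonempty) {a b : ι → ℝ} {t : ℝ}
    (h : ∀ i ∈ s, a i ≤ b i + t) : s.sup' hs a ≤ s.sup' hs b + t :=
  Finset.sup'_le hs a fun i hi => (h i hi).trans (by gcongr; exact Finset.le_sup' b hi)

/-- Maximum-cost case of Theorem IV.1: applying a Δ-maximum-error quantizer to an
ε-coreset yields an (ε + ρΔ + ε·ρΔ)-coreset. -/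
theorem quantized_coreset_max_cost
    (d n k : ℕ) (hn : 1 ≤ n) (hk : 1 ≤ k) (X : Type*) [Nonempty X]
    (ρ Δ ε : ℝ) (hρ : 0 ≤ ρ) (hΔ : 0 ≤ Δ) (hε : 0 ≤ ε)
    (f : EuclideanSpace ℝ (Fin d) → X → ℝ)
    (hf1 : ∀ y x, 1 ≤ f y x)
    (hlip : ∀ y z x, |f y x - f z x| ≤ ρ * ‖y - z‖)
    (y : Fin n → EuclideanSpace ℝ (Fin d))
    (q q' : Fin k → EuclideanSpace ℝ (Fin d))
    (hnen : (Finset.univ : Finset (Fin n)).Nonempty :=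
      Finset.univ_nonempty_iff.mpr (Fin.pos_iff_nonempty.mp hn))
    (hnek : (Finset.univ : Finset (Fin k)).Nonempty :=
      Finset.univ_nonempty_iff.mpr (Fin.pos_iff_nonempty.mp hk))
    (hcoreset : ∀ x : X,
      (1 - ε) * Finset.univ.sup' hnen (fun i => f (y i) x) ≤
        Finset.univ.sup' hnek (fun j => f (q j) x) ∧
      Finset.univ.sup' hnek (fun j => f (q j) x) ≤
        (1 + ε) * Finset.univ.sup' hnen (fun i => f (y i) x))
    (hq : ∀ j, ‖q j - q' j‖ ≤ Δ) :
    ∀ x : X,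
      (1 - (ε + ρ * Δ + ε * (ρ * Δ))) * Finset.univ.sup' hnen (fun i => f (y i) x) ≤
        Finset.univ.sup' hnek (fun j => f (q' j) x) ∧
      Finset.univ.sup' hnek (fun j => f (q' j) x) ≤
        (1 + ε + ρ * Δ + ε * (ρ * Δ)) * Finset.univ.sup' hnen (fun i => f (y i) x) := by
  intro x
  obtain ⟨hlow, hupp⟩ := hcoreset x
  have habs : ∀ j, |f (q j) x - f (q' j) x| ≤ ρ * Δ := fun j =>
    (hlip _ _ x).trans (mul_le_mul_of_nonneg_left (hq j) hρ)
  have h₁ := sup'_le_sup'_add hnek (a := fun j => f (q j) x) (b := fun j => f (q' j) x)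
    (t := ρ * Δ) fun j _ => by linarith [(abs_le.mp (habs j)).2]
  have h₂ := sup'_le_sup'_add hnek (a := fun j => f (q' j) x) (b := fun j => f (q j) x)
    (t := ρ * Δ) fun j _ => by linarith [(abs_le.mp (habs j)).1]
  have hM : 1 ≤ Finset.univ.sup' hnen (fun i => f (y i) x) := by
    obtain ⟨i, hi⟩ := hnen
    exact (hf1 (y i) x).trans (Finset.le_sup' (fun i => f (y i) x) hi)
  generalize Finset.univ.sup' hnen (fun i => f (y i) x) = M at *
  have ht : 0 ≤ ρ * Δ := mul_nonneg hρ hΔ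
  have htM : ρ * Δ ≤ ρ * Δ * M := le_mul_of_one_le_right ht hM
  have hεt : 0 ≤ ε * (ρ * Δ) * M := mul_nonneg (mul_nonneg hε ht) (by linarith)
  constructor <;> linarith
end

section
/- Let d, n, k ∈ ℕ with n ≥ 1 and k ≥ 1, let X be a nonempty type, let ρ ≥ 0 and D ≥ 0. Let f : EuclideanSpace ℝ (Fin d) → X → ℝ satisfy f(y, x) ≥ 1 for all y and x ∈ X, and be ρ-Lipschitz in its first argument. Let (y_1, …, y_n) be points of EuclideanSpace ℝ (Fin d), let c_1, …, c_k be points (cluster centers), and let π : {1, …, n} → {1, …, k} be an assignment of each data point to a center such that ‖y_i − c_{π(i)}‖ ≤ D for every i. For each j let w_j = |{i : π(i) = j}| be the number of points assigned to center j. Then for every x ∈ X, (1 − ρD)·∑_{i=1}^n f(y_i, x) ≤ ∑_{j=1}^k w_j f(c_j, x) ≤ (1 + ρD)·∑_{i=1}^n f(y_i, x). -/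
/-!
The weighted sum over centers regroups, fiber by fiber of `π`, into `∑ i, f (c (π i)) x`. Each term
differs from `f (y i) x` by at most `ρ * D`, which is at most `ρ * D * f (y i) x` because `1 ≤ f`;
summing over `i` gives both bounds.
-/

/-- Sum-cost case of Lemma V.1: clustering centers, each weighted by the number of points
in its cluster, form a ρD-coreset with respect to the sum cost whenever every point is
within distance D of its assigned center. -/
theorem clustering_centers_coreset_sum_cost
    (d n k : ℕ) (hn : 1 ≤ n) (hk : 1 ≤ k) (X : Type*) [Nonempty X]
    (ρ D : ℝ) (hρ : 0 ≤ ρ) (hD : 0 ≤ D)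
    (f : EuclideanSpace ℝ (Fin d) → X → ℝ)
    (hf1 : ∀ y x, 1 ≤ f y x)
    (hlip : ∀ y z x, |f y x - f z x| ≤ ρ * ‖y - z‖)
    (y : Fin n → EuclideanSpace ℝ (Fin d))
    (c : Fin k → EuclideanSpace ℝ (Fin d))
    (π : Fin n → Fin k)
    (hassign : ∀ i, ‖y i - c (π i)‖ ≤ D) :
    ∀ x : X,
      (1 - ρ * D) * ∑ i, f (y i) x ≤
        ∑ j, ((Finset.univ.filter (fun i => π i = j)).card : ℝ) * f (c j) x ∧
      ∑ j, ((Finset.univ.filter (fun i => π i = j)).card : ℝ) * f (c j) x ≤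
        (1 + ρ * D) * ∑ i, f (y i) x := by
  intro x
  have hsum : ∑ j, ((Finset.univ.filter (fun i => π i = j)).card : ℝ) * f (c j) x =
      ∑ i, f (c (π i)) x := by
    rw [← Finset.sum_fiberwise Finset.univ π (fun i => f (c (π i)) x)]
    refine Finset.sum_congr rfl fun j _ => ?_
    rw [← nsmul_eq_mul, ← Finset.sum_const]
    refine Finset.sum_congr rfl fun i hi => ?_
    rw [(Finset.mem_filter.mp hi).2]
  -- Since `1 ≤ f`, the additive Lipschitz error `ρ * D` is also a relative error.
  have key : ∀ i, |f (y i) x - f (c (π i)) x| ≤ ρ * D * f (y i) x := fun i =>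
    calc |f (y i) x - f (c (π i)) x| ≤ ρ * ‖y i - c (π i)‖ := hlip _ _ x
      _ ≤ ρ * D := mul_le_mul_of_nonneg_left (hassign i) hρ
      _ ≤ ρ * D * f (y i) x := le_mul_of_one_le_right (mul_nonneg hρ hD) (hf1 _ x)
  rw [hsum, Finset.mul_sum, Finset.mul_sum]
  constructor <;> refine Finset.sum_le_sum fun i _ => ?_ <;>
    linarith [(abs_le.mp (key i)).1, (abs_le.mp (key i)).2]
end

section
/- Let d, n, k ∈ ℕ with n ≥ 1 and k ≥ 1, let X be a nonempty type, let ρ ≥ 0 and D ≥ 0. Let f : EuclideanSpace ℝ (Fin d) → X → ℝ satisfy f(y, x) ≥ 1 for all y and x ∈ X, and be ρ-Lipschitz in its first argument. Let (y_1, …, y_n) be points of EuclideanSpace ℝ (Fin d), let c_1, …, c_k be points (cluster centers), and let π : {1, …, n} → {1, …, k} be a surjective assignment of each data point to a center such that ‖y_i − c_{π(i)}‖ ≤ D for every i. Then for every x ∈ X, (1 − ρD)·max_{1≤i≤n} f(y_i, x) ≤ max_{1≤j≤k} f(c_j, x) ≤ (1 + ρD)·max_{1≤i≤n} f(y_i,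 x). -/
/-!
The Lipschitz bound and `‖y i - c (π i)‖ ≤ D` give the additive estimate
`|f (y i) x - f (c (π i)) x| ≤ ρ * D` for every `i`. Evaluating it at a maximizing point
(lower bound), or at a point of the cluster of a maximizing center, which exists by
surjectivity of `π` (upper bound), shows that the two maxima differ by at most `ρ * D`.
Since `f ≥ 1`, the maximum over the points is at least `1`, so the additive error `ρ * D` is
at most `ρ * D` times that maximum.
-/

/-- Maximum-cost case of Lemma V.1: clustering centers form a ρD-coreset with respect to
the maximum cost whenever every point is within distance D of its assigned center and
every cluster is nonempty. -/
theorem clustering_centers_coreset_max_cost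
    (d n k : ℕ) (hn : 1 ≤ n) (hk : 1 ≤ k) (X : Type*) [Nonempty X]
    (ρ D : ℝ) (hρ : 0 ≤ ρ) (hD : 0 ≤ D)
    (f : EuclideanSpace ℝ (Fin d) → X → ℝ)
    (hf1 : ∀ y x, 1 ≤ f y x)
    (hlip : ∀ y z x, |f y x - f z x| ≤ ρ * ‖y - z‖)
    (y : Fin n → EuclideanSpace ℝ (Fin d))
    (c : Fin k → EuclideanSpace ℝ (Fin d))
    (π : Fin n → Fin k) (hsurj : Function.Surjective π)
    (hassign : ∀ i, ‖y i - c (π i)‖ ≤ D)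
    (hnen : (Finset.univ : Finset (Fin n)).Nonempty :=
      Finset.univ_nonempty_iff.mpr (Fin.pos_iff_nonempty.mp hn))
    (hnek : (Finset.univ : Finset (Fin k)).Nonempty :=
      Finset.univ_nonempty_iff.mpr (Fin.pos_iff_nonempty.mp hk)) :
    ∀ x : X,
      (1 - ρ * D) * Finset.univ.sup' hnen (fun i => f (y i) x) ≤
        Finset.univ.sup' hnek (fun j => f (c j) x) ∧
      Finset.univ.sup' hnek (fun j => f (c j) x) ≤
        (1 + ρ * D) * Finset.univ.sup' hnen (fun i => f (y i) x) := by
  intro x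
  have hclose : ∀ i, |f (y i) x - f (c (π i)) x| ≤ ρ * D := fun i =>
    (hlip _ _ x).trans (mul_le_mul_of_nonneg_left (hassign i) hρ)
  obtain ⟨i₀, -, hi₀⟩ := Finset.exists_mem_eq_sup' hnen (fun i => f (y i) x)
  have hy : ∀ i, f (y i) x ≤ Finset.univ.sup' hnen (fun i => f (y i) x) := fun i =>
    Finset.le_sup' (fun i => f (y i) x) (Finset.mem_univ i)
  have hc : ∀ j, f (c j) x ≤ Finset.univ.sup' hnek (fun j => f (c j) x) := fun j =>
    Finset.le_sup' (fun j => f (c j) x) (Finset.mem_univ j)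
  have herr : ρ * D ≤ ρ * D * Finset.univ.sup' hnen (fun i => f (y i) x) :=
    le_mul_of_one_le_right (mul_nonneg hρ hD) ((hf1 (y i₀) x).trans (hy i₀))
  constructor
  · have h := (abs_le.mp (hclose i₀)).2
    have hci := hc (π i₀)
    linarith
  · refine Finset.sup'_le hnek _ fun j _ => ?_
    obtain ⟨i, rfl⟩ := hsurj j
    have h := (abs_le.mp (hclose i)).1
    have hyi := hy i
    linarith
end
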